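/- Let n ≥ 3. Then the polynomial identity (d/dx)H_{2,n}^{({1,1})}(x) = 8n(n−1)(n−2)·H_{{1,1}}(x)·H_{n−3}(x) = 32n(n−1)(n−2)·(2x²+1)·H_{n−3}(x) holds for all x. -/

import Mathlib

open Polynomial

/-- Physicists' Hermite polynomials: `H_0 = 1`, `H_n = 2x H_{n-1} - H_{n-1}'`. -/
noncomputable def hermitePhys : ℕ → Polynomial ℝ
  | 0 => 1
  | n + 1 => 2 * Polynomial.X * hermitePhys n - Polynomial.derivative (hermitePhys n)

/-- Exceptional `X_2`-Hermite polynomial for the partition `{1,1}`. -/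
noncomputable def XHerm (n : ℕ) (x : ℝ) : ℝ :=
  Matrix.det
    !![2 * x, 4 * x ^ 2 - 2, (hermitePhys n).eval x;
       2, 8 * x, ((hermitePhys n).derivative).eval x;
       0, 8, ((hermitePhys n).derivative.derivative).eval x]

theorem hermitePhys_deriv (n : ℕ) :
    derivative (hermitePhys (n + 1)) = 2 * ((n : ℝ[X]) + 1) * hermitePhys n := by
  induction n with
  | zero => simp [hermitePhys]
  | succ k ih =>
    have e : hermitePhys (k + 1) = 2 * X * hermitePhys k - derivative (hermitePhys k) := rfl
    have e2 : hermitePhys (k + 1 + 1)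
        = 2 * X * hermitePhys (k + 1) - derivative (hermitePhys (k + 1)) := rfl
    rw [e2, ih]
    simp only [derivative_sub, derivative_mul, derivative_X, derivative_ofNat, derivative_add,
      derivative_natCast, derivative_one, ih]
    push_cast
    linear_combination (-2 * ((k : ℝ[X]) + 1)) * e

theorem stmt12 (n : ℕ) (hn : 3 ≤ n) :
    ∀ x : ℝ,
      deriv (XHerm n) x =
          8 * (n : ℝ) * ((n : ℝ) - 1) * ((n : ℝ) - 2) *
            (4 * (2 * x ^ 2 + 1)) * (hermitePhys (n - 3)).eval x ∧
      deriv (XHerm n) x =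
          32 * (n : ℝ) * ((n : ℝ) - 1) * ((n : ℝ) - 2) *
            (2 * x ^ 2 + 1) * (hermitePhys (n - 3)).eval x := by
  intro x
  obtain ⟨m, rfl⟩ := Nat.exists_eq_add_of_le' hn
  have h3 : derivative (derivative (derivative (hermitePhys (m + 3))))
      = 8 * ((m : ℝ[X]) + 3) * (m + 2) * (m + 1) * hermitePhys m := by
    rw [hermitePhys_deriv (m + 2)]
    simp only [derivative_mul, derivative_ofNat, derivative_add,
      derivative_natCast, derivative_one, derivative_zero, hermitePhys_deriv (m + 1), hermitePhys_deriv m]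
    push_cast
    ring
  have hX : XHerm (m + 3) = fun y => ((8 * X ^ 2 + 4) *
      derivative (derivative (hermitePhys (m + 3))) - 16 * X * derivative (hermitePhys (m + 3))
      + 16 * hermitePhys (m + 3) : ℝ[X]).eval y := by
    funext y
    simp [XHerm, Matrix.det_fin_three]
    ring
  have key : deriv (XHerm (m + 3)) x = (8 * x ^ 2 + 4) *
      (8 * ((m : ℝ) + 3) * (m + 2) * (m + 1) * (hermitePhys m).eval x) := by
    rw [hX, Polynomial.deriv]
    simp only [derivative_mul, derivative_ofNat, derivative_add, derivative_sub, derivative_X_pow,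
      derivative_X, h3]
    simp
    ring
  rw [key]
  simp only [Nat.add_sub_cancel]
  push_cast
  constructor <;> ring
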